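/- Assume 0 < a₁ < a₂ (so that m > 1), b < 0, and p₁ > 2, and assume the shape conditions p₁ − 3 ≤ −h*/a₁ ≤ p₁ − 2 and −h*/a₁ + 3 ≤ T, where h* := b/(m − 1) < 0. Then the T-periodic solution x(·,h*) is unstable: there exists ε₀ > 0 such that for every η > 0 there exists h < 0 with 0 < |h − h*| < η and a time t ≥ 0 such that |x(t,h) − x(t,h*)| ≥ ε₀. -/

import Mathlib

/-! The instability of the periodic solution reduces to a one-dimensional expanding map.

Only the sign of the history enters the equation, so a solution that is negative on `(-1, 0)` and
equals `h < 0` at time `0` is determined afterwards by `h` alone. Write `h = -a₁ z`. As long as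
`p₁ - 3 ≤ z ≤ p₁ - 2` and `z + 3 ≤ T`, the solution rises with slope `a₁` through its zero `z`
up to time `z + 1`, falls through its zero `z + 2` until time `z + 3` (the slope changes
from `-a₁` to `-a₂` at `p₁`), then rises with slope `a₂` until time `T`. If its value
`m h - b` at time `T` is negative, it is negative on `(T - 1, T)` too, and the situation repeats
(`Good.period`). So the values at multiples of `T` follow `h ↦ m h - b`, which fixes `h*` and
multiplies deviations from `h*` by `m > 1`.

The shape conditions hold at `h*` possibly with equality, so perturbations are taken on one side
of `h*` only: on the side `h > h*` unless `-h*/a₁ = p₁ - 3`, and on the side `h < h*` in that case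
(`exists_side`). Since `m > 0`, the iteration preserves the side, and a deviation that starts nonzero
cannot stay below the width `δ` of the admissible one-sided neighbourhood. -/

open Set Filter

/-- `t mod T`, i.e. `t - T⌊t/T⌋ ∈ [0,T)` for `T > 0`. -/
noncomputable def rmod (T t : ℝ) : ℝ := t - T * (⌊t / T⌋ : ℝ)

/-- `f₀(x) = -sign x`. -/
noncomputable def f0 (x : ℝ) : ℝ := -Real.sign x

/-- The `(p₁+p₂)`-periodic step coefficient. -/
noncomputable def A0 (p1 p2 a1 a2 t : ℝ) : ℝ :=
  if rmod (p1 + p2) t < p1 then a1 else a2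

/-- `x` is the solution on `[-1,∞)` of `x'(t) = a(t) f(x(t-1))` with initial function `φ`. -/
def IsSolution (a f φ x : ℝ → ℝ) : Prop :=
  ContinuousOn x (Ici (-1 : ℝ)) ∧ (∀ s ∈ Icc (-1 : ℝ) 0, x s = φ s) ∧
    ∀ t ≥ (0 : ℝ), x t = φ 0 + ∫ s in (0:ℝ)..t, a s * f (x (s - 1))

/-- Solution with constant initial function `≡ h`. -/
def IsSolutionC (a f : ℝ → ℝ) (h : ℝ) (x : ℝ → ℝ) : Prop :=
  IsSolution a f (fun _ => h) x

lemma A0_of_lt {p1 p2 a1 a2 u : ℝ} (hp2 : 0 < p2) (h0 : 0 ≤ u) (h1 : u < p1) :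
    A0 p1 p2 a1 a2 u = a1 := by
  have hf : ⌊u / (p1 + p2)⌋ = 0 := by
    rw [Int.floor_eq_zero_iff]
    exact ⟨div_nonneg h0 (by linarith), by rw [div_lt_one (by linarith)]; linarith⟩
  simp [A0, rmod, hf, h1]

lemma A0_of_ge {p1 p2 a1 a2 u : ℝ} (hp1 : 0 < p1) (h0 : p1 ≤ u) (h1 : u < p1 + p2) :
    A0 p1 p2 a1 a2 u = a2 := by
  have hf : ⌊u / (p1 + p2)⌋ = 0 := by
    rw [Int.floor_eq_zero_iff]
    exact ⟨div_nonneg (by linarith) (by linarith), by rw [div_lt_one (by linarith)]; linarith⟩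
  simp [A0, rmod, hf, h0]

lemma A0_add_period {p1 p2 a1 a2 : ℝ} (hT : 0 < p1 + p2) (u : ℝ) :
    A0 p1 p2 a1 a2 (u + (p1 + p2)) = A0 p1 p2 a1 a2 u := by
  have : rmod (p1 + p2) (u + (p1 + p2)) = rmod (p1 + p2) u := by
    unfold rmod
    rw [add_div, div_self hT.ne', Int.floor_add_one]
    push_cast
    ring
  simp [A0, this]

lemma f0_of_neg {x : ℝ} (h : x < 0) : f0 x = 1 := by simp [f0, Real.sign_of_neg h]

lemma f0_of_pos {x : ℝ} (h : 0 < x) : f0 x = -1 := by simp [f0, Real.sign_of_pos h]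

lemma measurable_f0 : Measurable f0 := by
  unfold f0 Real.sign
  exact (Measurable.ite measurableSet_Iio measurable_const
    (Measurable.ite measurableSet_Ioi measurable_const measurable_const)).neg

lemma abs_f0_le (x : ℝ) : |f0 x| ≤ 1 := by
  rcases Real.sign_apply_eq x with h | h | h <;> simp [f0, h]

lemma measurable_A0 (p1 p2 a1 a2 : ℝ) : Measurable (A0 p1 p2 a1 a2) := by
  have hr : Measurable (rmod (p1 + p2)) := by
    unfold rmod
    fun_prop
  exact Measurable.ite (measurableSet_lt hr measurable_const) measurable_const measurable_const

lemma abs_A0_le (p1 p2 a1 a2 u : ℝ) : |A0 p1 p2 a1 a2 u| ≤ max |a1| |a2| := by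
  unfold A0
  split_ifs <;> simp

/-- `y` satisfies the delay equation on `[0, ∞)` in integrated form, with value `h` at time `0`
and a history that is negative on `(-1, 0)`; nothing else about the history matters. -/
def Good (p1 p2 a1 a2 h : ℝ) (y : ℝ → ℝ) : Prop :=
  y 0 = h ∧ (∀ u ∈ Ioo (-1 : ℝ) 0, y u < 0) ∧
    ∀ s t : ℝ, 0 ≤ s → s ≤ t → y t = y s + ∫ u in s..t, A0 p1 p2 a1 a2 u * f0 (y (u - 1))

lemma IsSolutionC.good {p1 p2 a1 a2 h : ℝ} {x : ℝ → ℝ}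
    (hx : IsSolutionC (A0 p1 p2 a1 a2) f0 h x) (hh : h < 0) : Good p1 p2 a1 a2 h x := by
  obtain ⟨hc, hi, heq⟩ := hx
  have hcont : Continuous fun u : ℝ => x (max (u - 1) (-1)) :=
    hc.comp_continuous (by fun_prop) (fun u => mem_Ici.2 (le_max_right _ _))
  have hmeas : Measurable fun u : ℝ => A0 p1 p2 a1 a2 u * f0 (x (max (u - 1) (-1))) :=
    (measurable_A0 p1 p2 a1 a2).mul (measurable_f0.comp hcont.measurable)
  -- Freezing the argument of `x` at `-1` makes the integrand globally measurable without
  -- changing it on `[0, ∞)`.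
  have hint : ∀ t : ℝ, 0 ≤ t → IntervalIntegrable
      (fun u => A0 p1 p2 a1 a2 u * f0 (x (u - 1))) MeasureTheory.volume 0 t := by
    intro t ht
    have h1 : IntervalIntegrable
        (fun u : ℝ => A0 p1 p2 a1 a2 u * f0 (x (max (u - 1) (-1)))) MeasureTheory.volume 0 t := by
      refine (intervalIntegrable_const (c := max |a1| |a2|)).mono_fun
        hmeas.aestronglyMeasurable (Eventually.of_forall fun u => ?_)
      simp only [Real.norm_eq_abs, abs_mul]
      calc _ ≤ max |a1| |a2| * 1 := mul_le_mul (abs_A0_le ..) (abs_f0_le _) (abs_nonneg _)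
              (le_max_of_le_left (abs_nonneg _))
        _ ≤ _ := by rw [mul_one]; exact le_abs_self _
    refine h1.congr ?_
    intro u hu
    rw [uIoc_of_le ht] at hu
    have : max (u - 1) (-1) = u - 1 := max_eq_left (by linarith [hu.1])
    simp only [this]
  refine ⟨hi 0 ⟨by norm_num, le_rfl⟩, fun u hu => ?_, fun s t hs hst => ?_⟩
  · rw [hi u ⟨hu.1.le, hu.2.le⟩]
    exact hh
  · rw [heq t (hs.trans hst), heq s hs, add_assoc,
      intervalIntegral.integral_add_adjacent_intervals (hint s hs)
        ((hint s hs).symm.trans (hint t (hs.trans hst)))]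

lemma Good.linear {p1 p2 a1 a2 h : ℝ} {y : ℝ → ℝ} (hy : Good p1 p2 a1 a2 h y) {s t c : ℝ}
    (hs : 0 ≤ s) (hst : s ≤ t)
    (hc : ∀ u ∈ Ioo s t, A0 p1 p2 a1 a2 u * f0 (y (u - 1)) = c) :
    y t = y s + c * (t - s) := by
  rw [hy.2.2 s t hs hst]
  have : ∫ u in s..t, A0 p1 p2 a1 a2 u * f0 (y (u - 1)) = ∫ _u in s..t, c := by
    rw [intervalIntegral.integral_of_le hst, intervalIntegral.integral_of_le hst,
      MeasureTheory.integral_Ioc_eq_integral_Ioo, MeasureTheory.integral_Ioc_eq_integral_Ioo]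
    exact MeasureTheory.setIntegral_congr_fun measurableSet_Ioo hc
  rw [this, intervalIntegral.integral_const, smul_eq_mul, mul_comm]

/-- One period of the dynamics: the sign pattern of the history is reproduced after time
`T = p1 + p2`, and the new starting value is an affine function of `z`. -/
lemma Good.period {p1 p2 a1 a2 z : ℝ} {y : ℝ → ℝ} (ha1 : 0 < a1) (ha2 : 0 < a2) (hp1 : 2 < p1)
    (hp2 : 0 < p2) (hz : 0 < z) (hz1 : p1 - 3 ≤ z) (hz2 : z ≤ p1 - 2) (hz3 : z + 3 ≤ p1 + p2)
    (hneg : -a1 * (p1 - z - 2) - a2 * (z + 3 - p1) + a2 * (p1 + p2 - z - 3) < 0)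
    (hy : Good p1 p2 a1 a2 (-a1 * z) y) :
    Good p1 p2 a1 a2 (-a1 * (p1 - z - 2) - a2 * (z + 3 - p1) + a2 * (p1 + p2 - z - 3))
      (fun s => y (s + (p1 + p2))) := by
  -- The zero `z` may lie beyond the delay `1`, so the first rise is obtained by the method of
  -- steps, one unit of time after another.
  have hrise : ∀ n : ℕ, ∀ t : ℝ, 0 ≤ t → t ≤ n → t ≤ z + 1 → y t = a1 * (t - z) := by
    intro n
    induction n with
    | zero =>
      intro t h0 h1 _
      have : t = 0 := le_antisymm (by simpa using h1) h0
      rw [this, hy.1]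
      ring
    | succ n ih =>
      intro t h0 h1 h2
      rw [hy.linear (s := 0) (c := a1) le_rfl h0, hy.1]
      · ring
      · intro u hu
        rw [A0_of_lt hp2 hu.1.le (by linarith [hu.2])]
        have hyn : y (u - 1) < 0 := by
          rcases lt_or_ge (u - 1) 0 with h | h
          · exact hy.2.1 _ ⟨by linarith [hu.1], h⟩
          · push_cast at h1
            rw [ih (u - 1) h (by linarith [hu.2]) (by linarith [hu.2])]
            exact mul_neg_of_pos_of_neg ha1 (by linarith [hu.2])
        rw [f0_of_neg hyn, mul_one]
  have hA : ∀ t : ℝ, 0 ≤ t → t ≤ z + 1 → y t = a1 * (t - z) := by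
    intro t h0 h1
    obtain ⟨n, hn⟩ := exists_nat_ge t
    exact hrise n t h0 hn h1
  have hB : ∀ t : ℝ, z + 1 ≤ t → t ≤ z + 2 → y t = a1 * (z + 2 - t) := by
    intro t h0 h1
    rw [hy.linear (s := z + 1) (c := -a1) (by linarith) h0,
      hA (z + 1) (by linarith) le_rfl]
    · ring
    · intro u hu
      have hyp : 0 < y (u - 1) := by
        rw [hA (u - 1) (by linarith [hu.1]) (by linarith [hu.2])]
        exact mul_pos ha1 (by linarith [hu.1])
      rw [A0_of_lt hp2 (by linarith [hu.1]) (by linarith [hu.2]), f0_of_pos hyp]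
      ring
  have hBpos : ∀ t : ℝ, z + 1 ≤ t → t < z + 2 → 0 < y t := by
    intro t h0 h1
    rw [hB t h0 h1.le]
    exact mul_pos ha1 (by linarith)
  have hC : ∀ t : ℝ, z + 2 ≤ t → t ≤ p1 → y t = a1 * (z + 2 - t) := by
    intro t h0 h1
    rw [hy.linear (s := z + 2) (c := -a1) (by linarith) h0,
      hB (z + 2) (by linarith) le_rfl]
    · ring
    · intro u hu
      rw [A0_of_lt hp2 (by linarith [hu.1]) (by linarith [hu.2]),
        f0_of_pos (hBpos (u - 1) (by linarith [hu.1]) (by linarith [hu.2]))]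
      ring
  have hD : ∀ t : ℝ, p1 ≤ t → t ≤ z + 3 →
      y t = -a1 * (p1 - z - 2) - a2 * (t - p1) := by
    intro t h0 h1
    rw [hy.linear (s := p1) (c := -a2) (by linarith) h0,
      hC p1 (by linarith) le_rfl]
    · ring
    · intro u hu
      rw [A0_of_ge (by linarith) hu.1.le (by linarith [hu.2]),
        f0_of_pos (hBpos (u - 1) (by linarith [hu.1]) (by linarith [hu.2]))]
      ring
  have hCDneg : ∀ t : ℝ, z + 2 < t → t ≤ z + 3 → y t < 0 := by
    intro t h0 h1
    rcases le_or_gt t p1 with h | h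
    · rw [hC t h0.le h]
      exact mul_neg_of_pos_of_neg ha1 (by linarith)
    · rw [hD t h.le h1]
      have := mul_pos ha2 (sub_pos.2 h)
      have := mul_nonneg ha1.le (show 0 ≤ p1 - z - 2 by linarith)
      linarith
  -- On the second rise negativity up to time `T` follows from negativity of the value at `T`.
  have hEneg : ∀ t : ℝ, t ≤ p1 + p2 →
      -a1 * (p1 - z - 2) - a2 * (z + 3 - p1) + a2 * (t - z - 3) < 0 := by
    intro t ht
    have := mul_le_mul_of_nonneg_left ht ha2.le
    linarith
  have hrise2 : ∀ n : ℕ, ∀ t : ℝ, z + 3 ≤ t → t ≤ z + 3 + n → t ≤ p1 + p2 →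
      y t = -a1 * (p1 - z - 2) - a2 * (z + 3 - p1) + a2 * (t - z - 3) := by
    intro n
    induction n with
    | zero =>
      intro t h0 h1 _
      have : t = z + 3 := le_antisymm (by simpa using h1) h0
      rw [this, hD (z + 3) (by linarith) le_rfl]
      ring
    | succ n ih =>
      intro t h0 h1 h2
      rw [hy.linear (s := z + 3) (c := a2) (by linarith) h0, hD (z + 3) (by linarith) le_rfl]
      · ring
      · intro u hu
        have hyn : y (u - 1) < 0 := by
          rcases le_or_gt (u - 1) (z + 3) with h | h
          · exact hCDneg _ (by linarith [hu.1]) h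
          · push_cast at h1
            rw [ih (u - 1) h.le (by linarith [hu.2]) (by linarith [hu.2])]
            exact hEneg _ (by linarith [hu.2])
        rw [A0_of_ge (by linarith) (by linarith [hu.1]) (by linarith [hu.2]), f0_of_neg hyn, mul_one]
  have hE : ∀ t : ℝ, z + 3 ≤ t → t ≤ p1 + p2 →
      y t = -a1 * (p1 - z - 2) - a2 * (z + 3 - p1) + a2 * (t - z - 3) := by
    intro t h0 h1
    obtain ⟨n, hn⟩ := exists_nat_ge (t - (z + 3))
    exact hrise2 n t h0 (by linarith) h1
  refine ⟨?_, fun u hu => ?_, fun s t hs hst => ?_⟩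
  · simp only [zero_add]
    exact hE _ hz3 le_rfl
  · change y (u + (p1 + p2)) < 0
    rcases le_or_gt (u + (p1 + p2)) (z + 3) with h | h
    · exact hCDneg _ (by linarith [hu.1]) h
    · rw [hE _ h.le (by linarith [hu.2])]
      exact hEneg _ (by linarith [hu.2])
  · change y (t + (p1 + p2)) = y (s + (p1 + p2)) + _
    rw [hy.2.2 (s + (p1 + p2)) (t + (p1 + p2)) (by linarith) (by linarith),
      ← intervalIntegral.integral_comp_add_right]
    congr 1
    refine intervalIntegral.integral_congr fun u _ => ?_
    simp only [A0_add_period (show 0 < p1 + p2 by linarith)]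
    congr 3
    ring

/-- A starting value `h` for which one period of the dynamics has the expected shape and ends at a
negative value again. -/
def Valid (p1 p2 a1 m b h : ℝ) : Prop :=
  h < 0 ∧ p1 - 3 ≤ -h / a1 ∧ -h / a1 ≤ p1 - 2 ∧ -h / a1 + 3 ≤ p1 + p2 ∧ m * h - b < 0

lemma Good.step {p1 p2 a1 a2 m b h : ℝ} {y : ℝ → ℝ} (ha1 : 0 < a1) (ha2 : 0 < a2) (hp1 : 2 < p1)
    (hp2 : 0 < p2) (hm : m = 2 * a2 / a1 - 1)
    (hb : b = a1 * (p1 - 2) + a2 * (6 - 2 * p1 - p2)) (hv : Valid p1 p2 a1 m b h)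
    (hy : Good p1 p2 a1 a2 h y) : Good p1 p2 a1 a2 (m * h - b) (fun s => y (s + (p1 + p2))) := by
  obtain ⟨h0, h1, h2, h3, h4⟩ := hv
  have hh : h = -a1 * (-h / a1) := by field_simp
  have hout : m * h - b = -a1 * (p1 - -h / a1 - 2) - a2 * (-h / a1 + 3 - p1)
      + a2 * (p1 + p2 - -h / a1 - 3) := by
    rw [hm, hb]
    field_simp
    ring
  rw [hout] at h4 ⊢
  rw [hh] at hy
  exact hy.period ha1 ha2 hp1 hp2 (div_pos (by linarith) ha1) h1 h2 h3 h4

/-- All starting values on one side `σ` of the fixed point and close enough to it are valid, even if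
the shape conditions hold with equality at the fixed point. -/
lemma exists_side {p1 p2 a1 m b hs : ℝ} (ha1 : 0 < a1) (hp2 : 0 < p2) (hm : 1 < m)
    (hfix : m * hs - b = hs) (h0 : hs < 0) (h1 : p1 - 3 ≤ -hs / a1) (h2 : -hs / a1 ≤ p1 - 2)
    (h3 : -hs / a1 + 3 ≤ p1 + p2) :
    ∃ σ δ : ℝ, |σ| = 1 ∧ 0 < δ ∧ ∀ e, 0 ≤ e → e < δ → Valid p1 p2 a1 m b (hs + σ * e) := by
  rcases h1.lt_or_eq with h1' | h1'
  · refine ⟨1, min (-hs / m) (a1 * (-hs / a1 - (p1 - 3))), by simp, ?_, fun e he hed => ?_⟩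
    · exact lt_min (div_pos (by linarith) (by linarith)) (mul_pos ha1 (by linarith))
    · obtain ⟨e1, e2⟩ := lt_min_iff.1 hed
      rw [lt_div_iff₀ (by linarith)] at e1
      have e3 : e / a1 < -hs / a1 - (p1 - 3) := by
        rw [div_lt_iff₀ ha1]
        linarith
      have e4 : 0 ≤ e / a1 := div_nonneg he ha1.le
      have e5 : -(hs + 1 * e) / a1 = -hs / a1 - e / a1 := by ring
      refine ⟨by nlinarith, ?_, ?_, ?_, by linarith⟩ <;> rw [e5] <;> linarith
  · refine ⟨-1, min a1 (a1 * p2), by simp, lt_min ha1 (mul_pos ha1 hp2), fun e he hed => ?_⟩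
    obtain ⟨e1, e2⟩ := lt_min_iff.1 hed
    have e3 : e / a1 < p2 := by
      rw [div_lt_iff₀ ha1]
      linarith
    have e3' : e / a1 < 1 := by
      rw [div_lt_one ha1]
      exact e1
    have e4 : 0 ≤ e / a1 := div_nonneg he ha1.le
    have e5 : -(hs + -1 * e) / a1 = -hs / a1 + e / a1 := by ring
    refine ⟨by linarith, ?_, ?_, ?_, by nlinarith⟩ <;> rw [e5] <;> linarith

/-- in the unstable case `0 < a₁ < a₂` (`m > 1`), `b < 0`, `p₁ > 2`, with the shape
conditions at `h* = b/(m-1) < 0`, the `T`-periodic solution `x(·,h*)` is unstable: there is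
`ε₀ > 0` such that for every `η > 0` there is a constant initial value `h < 0` with
`0 < |h - h*| < η` whose solution deviates from `x(·,h*)` by at least `ε₀` at some time `t ≥ 0`. -/
theorem stmt7 (p1 p2 a1 a2 m b hstar : ℝ)
    (ha1 : 0 < a1) (ha12 : a1 < a2) (hp1 : 2 < p1) (hp2 : 0 < p2) (hT : 1 < p1 + p2)
    (hm : m = 2 * a2 / a1 - 1) (hb : b = a1 * (p1 - 2) + a2 * (6 - 2 * p1 - p2))
    (hbneg : b < 0) (hhstar : hstar = b / (m - 1)) (hstarneg : hstar < 0)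
    (hshape1 : p1 - 3 ≤ -hstar / a1) (hshape2 : -hstar / a1 ≤ p1 - 2)
    (hshape3 : -hstar / a1 + 3 ≤ p1 + p2)
    (xstar : ℝ → ℝ) (hxs : IsSolutionC (A0 p1 p2 a1 a2) f0 hstar xstar) :
    ∃ ε0 > (0 : ℝ), ∀ η > (0 : ℝ), ∃ h : ℝ, h < 0 ∧ 0 < |h - hstar| ∧ |h - hstar| < η ∧
      ∀ x : ℝ → ℝ, IsSolutionC (A0 p1 p2 a1 a2) f0 h x →
        ∃ t ≥ (0 : ℝ), ε0 ≤ |x t - xstar t| := by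
  have ha2 : 0 < a2 := ha1.trans ha12
  have hm1 : 1 < m := by
    have : 1 < a2 / a1 := (one_lt_div ha1).2 ha12
    rw [hm, mul_div_assoc]
    linarith
  have hfix : m * hstar - b = hstar := by
    have : hstar * (m - 1) = b := by
      rw [hhstar, div_mul_cancel₀]
      linarith
    linarith
  obtain ⟨σ, δ, hσ, hδ, hvalid⟩ :=
    exists_side ha1 hp2 hm1 hfix hstarneg hshape1 hshape2 hshape3
  refine ⟨δ, hδ, fun η hη => ?_⟩
  have hmin : 0 < min δ η := lt_min hδ hη
  have he0 : 0 < min δ η / 2 := by linarith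
  have heδ : min δ η / 2 < δ := by linarith [min_le_left δ η]
  have heη : min δ η / 2 < η := by linarith [min_le_right δ η]
  generalize min δ η / 2 = e at he0 heδ heη
  have hdev : ∀ r : ℝ, 0 ≤ r → |hstar + σ * r - hstar| = r := by
    intro r hr
    rw [add_sub_cancel_left, abs_mul, hσ, one_mul, abs_of_nonneg hr]
  refine ⟨hstar + σ * e, (hvalid e he0.le heδ).1, ?_, ?_, fun x hx => ?_⟩
  · rwa [hdev e he0.le]
  · rwa [hdev e he0.le]
  by_contra! hcon
  have hstarGood : ∀ n : ℕ, Good p1 p2 a1 a2 hstar (fun s => xstar (s + n * (p1 + p2))) := by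
    intro n
    induction n with
    | zero => simpa using hxs.good hstarneg
    | succ n ih =>
      have hv : Valid p1 p2 a1 m b hstar :=
        ⟨hstarneg, hshape1, hshape2, hshape3, by rw [hfix]; exact hstarneg⟩
      have := ih.step ha1 ha2 hp1 hp2 hm hb hv
      rw [hfix] at this
      convert this using 3
      push_cast
      ring
  -- As long as the two solutions stay within `δ`, the deviation at time `n T` is exactly `m ^ n * e`.
  have hbound : ∀ n : ℕ, Good p1 p2 a1 a2 (hstar + σ * (m ^ n * e))
      (fun s => x (s + n * (p1 + p2))) → m ^ n * e < δ := by
    intro n hg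
    have h1 := hcon (n * (p1 + p2)) (by positivity)
    have h2 := hg.1
    have h3 := (hstarGood n).1
    simp only [zero_add] at h2 h3
    rwa [h2, h3, hdev _ (by positivity)] at h1
  have hxGood : ∀ n : ℕ, Good p1 p2 a1 a2 (hstar + σ * (m ^ n * e))
      (fun s => x (s + n * (p1 + p2))) := by
    intro n
    induction n with
    | zero => simpa using hx.good (hvalid e he0.le heδ).1
    | succ n ih =>
      have := ih.step ha1 ha2 hp1 hp2 hm hb (hvalid _ (by positivity) (hbound n ih))
      convert this using 1
      · rw [pow_succ]
        linear_combination -hfix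
      · funext s
        congr 1
        push_cast
        ring
  obtain ⟨n, hn⟩ := pow_unbounded_of_one_lt (δ / e) hm1
  rw [div_lt_iff₀ he0] at hn
  exact absurd (hbound n (hxGood n)) (not_lt.2 hn.le)
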